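/- Assume ω > 0. Let b, b' ∈ {0} ∪ c^{∖k} with b < b' and such that no element of {0} ∪ c^{∖k} lies strictly between b and b'. If ω b + S(b + ε_c) < |γ| < ω b' + S(b' − ε_c), then z* = (sign(γ)/ω)·(|γ| − S(b + ε_c)) satisfies b < |z*| < b' and z* is a minimizer over ℝ of the function G. -/

import Mathlib

open Finset Filter

noncomputable section

/-- The sign of a real number, with the convention `sgn 0 = 1`. -/
def sgn (t : ℝ) : ℝ := if t < 0 then -1 else 1

/-- A permutation sorting the absolute values of `β` in nonincreasing order. -/
def sortPerm {p : ℕ} (β : Fin p → ℝ) : Equiv.Perm (Fin p) :=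
  (Fin.revPerm).trans (Tuple.sort fun j => |β j|)

/-- The sorted ℓ₁ norm `J(β) = Σ_j λ_j |β|_(j)`. -/
def sortedL1 {p : ℕ} (lam β : Fin p → ℝ) : ℝ :=
  ∑ j, lam j * |β (sortPerm β j)|

/-- `β(z)`: the vector obtained from `β` by replacing entries of the cluster
`{i : |β i| = ck}` by `sign(β i) * z`. -/
def cupd {p : ℕ} (β : Fin p → ℝ) (ck z : ℝ) : Fin p → ℝ :=
  fun i => if |β i| = ck then sgn (β i) * z else β i

/-- The partial sorted ℓ₁ norm `H(z) = J(β(z))`. -/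
def Hfun {p : ℕ} (lam β : Fin p → ℝ) (ck : ℝ) (z : ℝ) : ℝ :=
  sortedL1 lam (cupd β ck z)

/-- `S(w) = Σ_{j ∈ C(w)} λ_{(j)⁻_w}`, where `C(w) = {j : |β(w)_j| = |w|}`. -/
def Sval {p : ℕ} (lam β : Fin p → ℝ) (ck : ℝ) (w : ℝ) : ℝ :=
  ∑ j, if |cupd β ck w j| = |w| then lam ((sortPerm (cupd β ck w))⁻¹ j) else 0

/-- squared Euclidean norm -/
def sqnorm {n : ℕ} (v : Fin n → ℝ) : ℝ := ∑ i, (v i) ^ 2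

/-- `G(z) = (1/2)‖y − Xβ(z)‖² + H(z)`. -/
def Gfun {n p : ℕ} (lam : Fin p → ℝ) (X : Matrix (Fin n) (Fin p) ℝ) (y : Fin n → ℝ)
    (β : Fin p → ℝ) (ck : ℝ) (z : ℝ) : ℝ :=
  (1/2) * sqnorm (fun i => y i - ∑ j, X i j * cupd β ck z j) + Hfun lam β ck z

/-- `x̃ = Σ_{j ∈ C_k} sign(β_j) X_{:j}`. -/
def xtil {n p : ℕ} (X : Matrix (Fin n) (Fin p) ℝ) (β : Fin p → ℝ) (ck : ℝ) : Fin n → ℝ :=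
  fun i => ∑ j, if |β j| = ck then sgn (β j) * X i j else 0

/-- `γ = c_k ω + x̃ᵀ r` where `r = y − Xβ` and `ω = ‖x̃‖²`. -/
def gam {n p : ℕ} (X : Matrix (Fin n) (Fin p) ℝ) (y : Fin n → ℝ) (β : Fin p → ℝ) (ck : ℝ) : ℝ :=
  ck * sqnorm (xtil X β ck) + ∑ i, xtil X β ck i * (y i - ∑ j, X i j * β j)

end

/-!
For a permutation `σ`, `∑ j, λ j * |β(z) (σ j)|` is affine in `|z|`; its slope is the total weight
that `σ` assigns to the cluster. By the rearrangement inequality this is a lower bound for `H z`,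
attained when `σ` sorts `β(z)`. As long as `|z|` meets no other cluster the sorting permutation does
not change, so there `H z = S * |z| + K`, while `S * |z| + K ≤ H z` holds for every `z`.
The least-squares term is `ω / 2 * z ^ 2 - γ * z` up to a constant. Hence `G` has a global minorant
whose minimizer is a soft threshold of `γ`, and the two bounds on `|γ|` put this minimizer in the
interval where `G` equals its minorant.
-/

section SoftThreshold

theorem abs_sgn (t : ℝ) : |sgn t| = 1 := by
  unfold sgn
  split_ifs <;> simp

theorem mul_sgn_self (t : ℝ) : t * sgn t = |t| := by
  unfold sgn
  split_ifs with h
  · rw [abs_of_neg h, mul_neg_one]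
  · rw [abs_of_nonneg (not_lt.mp h), mul_one]

theorem sgn_mul_abs (t : ℝ) : sgn t * |t| = t := by
  unfold sgn
  split_ifs with h
  · rw [abs_of_neg h, neg_mul_neg, one_mul]
  · rw [abs_of_nonneg (not_lt.mp h), one_mul]

theorem quadratic_vertex_le {𝕜 : Type*} [Field 𝕜] [LinearOrder 𝕜] [IsStrictOrderedRing 𝕜] {ω : 𝕜}
    (hω : 0 < ω) (a t : 𝕜) :
    ω / 2 * (a / ω) ^ 2 - a * (a / ω) ≤ ω / 2 * t ^ 2 - a * t := by
  have complete_square : ω / 2 * t ^ 2 - a * t - (ω / 2 * (a / ω) ^ 2 - a * (a / ω)) =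
      ω / 2 * (t - a / ω) ^ 2 := by
    field_simp
    ring
  rw [← sub_nonneg, complete_square]
  positivity

/-- The soft-thresholding operator with quadratic coefficient `ω` and threshold `S`, restricted to
its nonzero branch: for `0 < ω` and `S ≤ |γ|` it minimizes `ω / 2 * w ^ 2 - γ * w + S * |w|`, and no
truncation to `0` is made when `|γ| < S`. -/
noncomputable def softThreshold (ω γ S : ℝ) : ℝ := sgn γ / ω * (|γ| - S)

variable {ω γ S : ℝ}

theorem abs_softThreshold (hω : 0 < ω) (hS : S ≤ |γ|) :
    |softThreshold ω γ S| = (|γ| - S) / ω := by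
  rw [softThreshold, abs_mul, abs_div, abs_sgn, abs_of_pos hω, abs_of_nonneg (sub_nonneg.mpr hS),
    div_mul_eq_mul_div, one_mul]

theorem mul_softThreshold (hω : 0 < ω) (hS : S ≤ |γ|) :
    γ * softThreshold ω γ S = |γ| * |softThreshold ω γ S| := by
  rw [abs_softThreshold hω hS, softThreshold, ← mul_sgn_self γ]
  ring

theorem softThreshold_minimizes (hω : 0 < ω) (hS : S ≤ |γ|) (w : ℝ) :
    ω / 2 * softThreshold ω γ S ^ 2 - γ * softThreshold ω γ S + S * |softThreshold ω γ S| ≤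
      ω / 2 * w ^ 2 - γ * w + S * |w| := by
  have hγw : γ * w ≤ |γ| * |w| := (le_abs_self _).trans (abs_mul γ w).le
  calc ω / 2 * softThreshold ω γ S ^ 2 - γ * softThreshold ω γ S + S * |softThreshold ω γ S|
      = ω / 2 * ((|γ| - S) / ω) ^ 2 - (|γ| - S) * ((|γ| - S) / ω) := by
        rw [mul_softThreshold hω hS, ← sq_abs, abs_softThreshold hω hS]
        ring
    _ ≤ ω / 2 * |w| ^ 2 - (|γ| - S) * |w| := quadratic_vertex_le hω _ _
    _ ≤ ω / 2 * w ^ 2 - γ * w + S * |w| := by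
        rw [sq_abs]
        linarith

end SoftThreshold

section SortedL1

theorem sum_mul_comp_perm_le_of_antitone {ι R : Type*} [Fintype ι] [LinearOrder ι] [Semiring R]
    [LinearOrder R] [IsStrictOrderedRing R] [ExistsAddOfLE R] {f g : ι → R} {σ : Equiv.Perm ι}
    (hf : Antitone f) (hg : Antitone fun i => g (σ i)) (τ : Equiv.Perm ι) :
    ∑ i, f i * g (τ i) ≤ ∑ i, f i * g (σ i) := by
  simpa using (hf.monovary hg).sum_mul_comp_perm_le_sum_mul (σ := τ.trans σ.symm)

variable {p : ℕ} {lam : Fin p → ℝ}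

theorem antitone_abs_sortPerm (v : Fin p → ℝ) : Antitone fun j => |v (sortPerm v j)| :=
  fun _ _ hij => Tuple.monotone_sort (fun j => |v j|) (Fin.rev_le_rev.mpr hij)

theorem sum_mul_abs_perm_le_sortedL1 (hlam : Antitone lam) (v : Fin p → ℝ)
    (σ : Equiv.Perm (Fin p)) : ∑ j, lam j * |v (σ j)| ≤ sortedL1 lam v :=
  sum_mul_comp_perm_le_of_antitone (g := fun j => |v j|) hlam (antitone_abs_sortPerm v) σ

theorem sortedL1_eq_of_antitone (hlam : Antitone lam) {v : Fin p → ℝ} {σ : Equiv.Perm (Fin p)}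
    (hσ : Antitone fun j => |v (σ j)|) : sortedL1 lam v = ∑ j, lam j * |v (σ j)| :=
  (sum_mul_comp_perm_le_of_antitone (g := fun j => |v j|) hlam hσ _).antisymm
    (sum_mul_abs_perm_le_sortedL1 hlam v σ)

end SortedL1

section PartialPenalty

variable {p : ℕ} (lam β : Fin p → ℝ) (ck : ℝ)

/-- The total weight `∑ λ_{σ⁻¹(j)}` that an ordering `σ` of the coordinates assigns to the cluster
`{j : |β j| = ck}`. For `σ` sorting `β(w)` this is the paper's `S(w)`, provided that `|w|` is not
the absolute value of another cluster. -/
noncomputable def clusterWeight (σ : Equiv.Perm (Fin p)) : ℝ :=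
  ∑ j with |β j| = ck, lam (σ⁻¹ j)

/-- The part of the penalty under the ordering `σ` that is due to the coordinates outside the
cluster `{j : |β j| = ck}`; it does not depend on the value `z` of the cluster. -/
noncomputable def offClusterPenalty (σ : Equiv.Perm (Fin p)) : ℝ :=
  ∑ j with |β j| ≠ ck, lam (σ⁻¹ j) * |β j|

theorem abs_cupd (z : ℝ) (j : Fin p) :
    |cupd β ck z j| = if |β j| = ck then |z| else |β j| := by
  unfold cupd
  split_ifs
  · rw [abs_mul, abs_sgn, one_mul]
  · rfl

theorem sum_mul_abs_cupd_perm (σ : Equiv.Perm (Fin p)) (z : ℝ) :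
    ∑ j, lam j * |cupd β ck z (σ j)| =
      clusterWeight lam β ck σ * |z| + offClusterPenalty lam β ck σ := by
  calc ∑ j, lam j * |cupd β ck z (σ j)|
      = ∑ j, lam (σ⁻¹ j) * |cupd β ck z j| := by
        rw [← Equiv.sum_comp σ⁻¹ fun j => lam j * |cupd β ck z (σ j)|]
        simp only [Equiv.Perm.inv_def, Equiv.apply_symm_apply]
    _ = ∑ j, if |β j| = ck then lam (σ⁻¹ j) * |z| else lam (σ⁻¹ j) * |β j| := by
        simp only [abs_cupd, mul_ite]
    _ = clusterWeight lam β ck σ * |z| + offClusterPenalty lam β ck σ := by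
        rw [Finset.sum_ite, ← Finset.sum_mul, clusterWeight, offClusterPenalty]

variable {lam β ck}

theorem clusterWeight_mul_abs_add_le_Hfun (hlam : Antitone lam) (σ : Equiv.Perm (Fin p)) (z : ℝ) :
    clusterWeight lam β ck σ * |z| + offClusterPenalty lam β ck σ ≤ Hfun lam β ck z :=
  (sum_mul_abs_cupd_perm lam β ck σ z).symm.trans_le (sum_mul_abs_perm_le_sortedL1 hlam _ σ)

theorem Hfun_eq_of_antitone (hlam : Antitone lam) {σ : Equiv.Perm (Fin p)} {z : ℝ}
    (hσ : Antitone fun j => |cupd β ck z (σ j)|) :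
    Hfun lam β ck z = clusterWeight lam β ck σ * |z| + offClusterPenalty lam β ck σ :=
  (sortedL1_eq_of_antitone hlam hσ).trans (sum_mul_abs_cupd_perm lam β ck σ z)

theorem Sval_eq_clusterWeight {w : ℝ} (hw : ∀ j, |β j| ≠ ck → |β j| ≠ |w|) :
    Sval lam β ck w = clusterWeight lam β ck (sortPerm (cupd β ck w)) := by
  have mem_iff (j : Fin p) : |cupd β ck w j| = |w| ↔ |β j| = ck := by
    rw [abs_cupd]
    split_ifs with hj
    · simp only [hj]
    · simp only [hj, hw j hj]
  rw [Sval, clusterWeight, Finset.sum_filter]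
  simp only [mem_iff]

end PartialPenalty

section Gap

variable {p : ℕ} {lam β : Fin p → ℝ} {ck b b' u v w : ℝ}

theorem abs_cupd_le_abs_cupd_of_mem_Ioo (hgap : ∀ j, |β j| ≠ ck → |β j| ∉ Set.Ioo b b')
    (hu : |u| ∈ Set.Ioo b b') (hw : |w| ∈ Set.Ioo b b') {i j : Fin p}
    (hij : |cupd β ck u i| ≤ |cupd β ck u j|) : |cupd β ck w i| ≤ |cupd β ck w j| := by
  have below_or_above (l : Fin p) (hl : |β l| ≠ ck) : |β l| ≤ b ∨ b' ≤ |β l| := by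
    simpa only [Set.mem_Ioo, not_and_or, not_lt] using hgap l hl
  simp only [abs_cupd] at hij ⊢
  split_ifs at hij ⊢ with hi hj hj
  · exact le_rfl
  · rcases below_or_above j hj with hb | hb'
    · exact absurd (hij.trans hb) hu.1.not_ge
    · exact hw.2.le.trans hb'
  · rcases below_or_above i hi with hb | hb'
    · exact hb.trans hw.1.le
    · exact absurd (hb'.trans hij) hu.2.not_ge
  · exact hij

theorem Sval_eq_clusterWeight_of_mem_Ioo (hgap : ∀ j, |β j| ≠ ck → |β j| ∉ Set.Ioo b b')
    (hu : |u| ∈ Set.Ioo b b') :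
    Sval lam β ck u = clusterWeight lam β ck (sortPerm (cupd β ck u)) :=
  Sval_eq_clusterWeight fun j hj heq => hgap j hj (heq ▸ hu)

theorem Sval_mul_abs_add_le_Hfun (hlam : Antitone lam)
    (hgap : ∀ j, |β j| ≠ ck → |β j| ∉ Set.Ioo b b') (hu : |u| ∈ Set.Ioo b b') (w : ℝ) :
    Sval lam β ck u * |w| + offClusterPenalty lam β ck (sortPerm (cupd β ck u)) ≤
      Hfun lam β ck w := by
  rw [Sval_eq_clusterWeight_of_mem_Ioo hgap hu]
  exact clusterWeight_mul_abs_add_le_Hfun hlam _ w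

theorem Hfun_eq_Sval_mul_abs_add (hlam : Antitone lam)
    (hgap : ∀ j, |β j| ≠ ck → |β j| ∉ Set.Ioo b b') (hu : |u| ∈ Set.Ioo b b')
    (hw : |w| ∈ Set.Ioo b b') :
    Hfun lam β ck w =
      Sval lam β ck u * |w| + offClusterPenalty lam β ck (sortPerm (cupd β ck u)) := by
  rw [Sval_eq_clusterWeight_of_mem_Ioo hgap hu]
  exact Hfun_eq_of_antitone hlam fun _ _ hij =>
    abs_cupd_le_abs_cupd_of_mem_Ioo hgap hu hw (antitone_abs_sortPerm _ hij)

theorem slope_eq_of_eqOn_Ioo {R : Type*} [CommRing R] [LinearOrder R] [IsStrictOrderedRing R]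
    [DenselyOrdered R] {a a' k k' x y : R} (hxy : x < y)
    (h : ∀ t ∈ Set.Ioo x y, a * t + k = a' * t + k') : a = a' := by
  obtain ⟨t, hxt, hty⟩ := exists_between hxy
  obtain ⟨s, hxs, hst⟩ := exists_between hxt
  have hs := h s ⟨hxs, hst.trans hty⟩
  have ht := h t ⟨hxt, hty⟩
  exact mul_right_cancel₀ (sub_pos.mpr hst).ne' (by linear_combination ht - hs)

-- Both values are the slope of the same affine function of `|w|`, namely `H` on the gap.
theorem Sval_eq_Sval_of_mem_Ioo (hlam : Antitone lam) (hb : 0 ≤ b)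
    (hgap : ∀ j, |β j| ≠ ck → |β j| ∉ Set.Ioo b b') (hu : |u| ∈ Set.Ioo b b')
    (hv : |v| ∈ Set.Ioo b b') : Sval lam β ck u = Sval lam β ck v := by
  have affine_eq (t : ℝ) (ht : t ∈ Set.Ioo b b') :
      Sval lam β ck u * t + offClusterPenalty lam β ck (sortPerm (cupd β ck u)) =
        Sval lam β ck v * t + offClusterPenalty lam β ck (sortPerm (cupd β ck v)) := by
    have habs : |t| = t := abs_of_pos (hb.trans_lt ht.1)
    have hmem : |t| ∈ Set.Ioo b b' := by rwa [habs]
    calc Sval lam β ck u * t + offClusterPenalty lam β ck (sortPerm (cupd β ck u))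
        = Hfun lam β ck t := by rw [Hfun_eq_Sval_mul_abs_add hlam hgap hu hmem, habs]
      _ = _ := by rw [Hfun_eq_Sval_mul_abs_add hlam hgap hv hmem, habs]
  exact slope_eq_of_eqOn_Ioo (hu.1.trans hu.2) affine_eq

end Gap

section LeastSquares

open scoped Matrix

variable {n p : ℕ} (X : Matrix (Fin n) (Fin p) ℝ) (y : Fin n → ℝ) (β : Fin p → ℝ) (ck : ℝ)

/-- The direction in which `β(z)` moves with `z`: the signs of `β` on the cluster
`{j : |β j| = ck}`, and `0` outside it. -/
noncomputable def clusterSign : Fin p → ℝ := fun j => if |β j| = ck then sgn (β j) else 0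

theorem cupd_eq_add_smul_clusterSign (z : ℝ) :
    cupd β ck z = cupd β ck 0 + z • clusterSign β ck := by
  ext j
  simp only [cupd, clusterSign, Pi.add_apply, Pi.smul_apply, smul_eq_mul]
  split_ifs <;> ring

theorem cupd_self : cupd β ck ck = β := by
  ext j
  unfold cupd
  split_ifs with hj
  · rw [← hj, sgn_mul_abs]
  · rfl

theorem xtil_eq_mulVec_clusterSign : xtil X β ck = X *ᵥ clusterSign β ck := by
  ext i
  simp only [xtil, Matrix.mulVec, dotProduct, clusterSign, mul_ite, mul_zero, mul_comm]

theorem sub_mulVec_cupd (z : ℝ) :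
    y - X *ᵥ cupd β ck z = (y - X *ᵥ cupd β ck 0) - z • xtil X β ck := by
  rw [cupd_eq_add_smul_clusterSign, Matrix.mulVec_add, Matrix.mulVec_smul,
    ← xtil_eq_mulVec_clusterSign, sub_sub]

theorem sqnorm_eq_dotProduct (v : Fin n → ℝ) : sqnorm v = v ⬝ᵥ v := by
  simp only [sqnorm, dotProduct, sq]

theorem sqnorm_sub_smul (r v : Fin n → ℝ) (z : ℝ) :
    sqnorm (r - z • v) = sqnorm v * z ^ 2 - 2 * (v ⬝ᵥ r) * z + sqnorm r := by
  simp only [sqnorm_eq_dotProduct, sub_dotProduct, dotProduct_sub, smul_dotProduct,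
    dotProduct_smul, smul_eq_mul, dotProduct_comm r v]
  ring

-- Since `β = β(ck)`, the term `ck * ω` in `γ` turns the residual of `β` into that of `β(0)`.
theorem gam_eq_dotProduct :
    gam X y β ck = xtil X β ck ⬝ᵥ (y - X *ᵥ cupd β ck 0) := by
  have residual_eq : y - X *ᵥ β = (y - X *ᵥ cupd β ck 0) - ck • xtil X β ck := by
    rw [← sub_mulVec_cupd, cupd_self]
  calc gam X y β ck = ck * sqnorm (xtil X β ck) + xtil X β ck ⬝ᵥ (y - X *ᵥ β) := rfl
    _ = xtil X β ck ⬝ᵥ (y - X *ᵥ cupd β ck 0) := by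
      rw [residual_eq, dotProduct_sub, dotProduct_smul, smul_eq_mul, sqnorm_eq_dotProduct]
      ring

theorem Gfun_eq_quadratic_add_Hfun (lam : Fin p → ℝ) (z : ℝ) :
    Gfun lam X y β ck z =
      sqnorm (xtil X β ck) / 2 * z ^ 2 - gam X y β ck * z + Hfun lam β ck z +
        sqnorm (y - X *ᵥ cupd β ck 0) / 2 := by
  calc Gfun lam X y β ck z = 1 / 2 * sqnorm (y - X *ᵥ cupd β ck z) + Hfun lam β ck z := rfl
    _ = _ := by
      rw [sub_mulVec_cupd, sqnorm_sub_smul, gam_eq_dotProduct]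
      ring

end LeastSquares

section Thresholds

/-- The set `{0} ∪ c^{∖k}` of values at which a cluster with index `k` moving along `|z|` meets
zero or another cluster. -/
def thresholds {ι : Type*} (c : ι → ℝ) (k : ι) : Set ℝ := {x | x = 0 ∨ ∃ i, i ≠ k ∧ x = c i}

variable {ι : Type*} {c : ι → ℝ} {k : ι} {b b' : ℝ}

theorem nonneg_of_mem_thresholds (hc : ∀ i, 0 ≤ c i) (hb : b ∈ thresholds c k) : 0 ≤ b := by
  rcases hb with rfl | ⟨i, -, rfl⟩
  · exact le_rfl
  · exact hc i

theorem lt_sub_of_mem_thresholds {ε : ℝ} (hc : ∀ i, 0 ≤ c i)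
    (hsep : ∀ i j, i ≠ j → ε < |c i - c j|) (hmin : ∀ i, c i ≠ 0 → ε < c i)
    (hb : b ∈ thresholds c k) (hb' : b' ∈ thresholds c k) (hbb' : b < b') : ε < b' - b := by
  have hb'_pos : 0 < b' := (nonneg_of_mem_thresholds hc hb).trans_lt hbb'
  obtain ⟨i', -, rfl⟩ := hb'.resolve_left hb'_pos.ne'
  rcases hb with rfl | ⟨i, -, rfl⟩
  · simpa only [sub_zero] using hmin i' hb'_pos.ne'
  · have hne : i' ≠ i := fun h => hbb'.ne' (congrArg c h)
    simpa only [abs_of_pos (sub_pos.mpr hbb')] using hsep i' i hne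

theorem mem_thresholds_of_ne {x : ℝ} (hx : ∃ i, x = c i) (hne : x ≠ c k) : x ∈ thresholds c k := by
  obtain ⟨i, rfl⟩ := hx
  exact Or.inr ⟨i, fun h => hne (congrArg c h), rfl⟩

end Thresholds

theorem interior_case_minimizes_G_general {n p : ℕ} {lam β : Fin p → ℝ} {ck b b' u v : ℝ}
    (X : Matrix (Fin n) (Fin p) ℝ) (y : Fin n → ℝ) (hlam : Antitone lam)
    (hω : 0 < sqnorm (xtil X β ck)) (hb : 0 ≤ b)
    (hgap : ∀ j, |β j| ≠ ck → |β j| ∉ Set.Ioo b b')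
    (hu : u ∈ Set.Ioo b b') (hv : v ∈ Set.Ioo b b')
    (hγ_lo : sqnorm (xtil X β ck) * b + Sval lam β ck u < |gam X y β ck|)
    (hγ_hi : |gam X y β ck| < sqnorm (xtil X β ck) * b' + Sval lam β ck v) :
    let z := softThreshold (sqnorm (xtil X β ck)) (gam X y β ck) (Sval lam β ck u)
    b < |z| ∧ |z| < b' ∧ ∀ w, Gfun lam X y β ck z ≤ Gfun lam X y β ck w := by
  intro z
  have hu_abs : |u| ∈ Set.Ioo b b' := by rwa [abs_of_pos (hb.trans_lt hu.1)]
  have hv_abs : |v| ∈ Set.Ioo b b' := by rwa [abs_of_pos (hb.trans_lt hv.1)]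
  rw [← Sval_eq_Sval_of_mem_Ioo hlam hb hgap hu_abs hv_abs] at hγ_hi
  have hS : Sval lam β ck u ≤ |gam X y β ck| := by linarith [mul_nonneg hω.le hb]
  have habs : |z| = (|gam X y β ck| - Sval lam β ck u) / sqnorm (xtil X β ck) :=
    abs_softThreshold hω hS
  have hz : |z| ∈ Set.Ioo b b' := by
    rw [habs, Set.mem_Ioo, lt_div_iff₀' hω, div_lt_iff₀' hω]
    exact ⟨lt_sub_iff_add_lt.mpr hγ_lo, sub_lt_iff_lt_add.mpr hγ_hi⟩
  refine ⟨hz.1, hz.2, fun w => ?_⟩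
  rw [Gfun_eq_quadratic_add_Hfun, Gfun_eq_quadratic_add_Hfun,
    Hfun_eq_Sval_mul_abs_add hlam hgap hu_abs hz]
  linarith [softThreshold_minimizes hω hS w, Sval_mul_abs_add_le_Hfun hlam hgap hu_abs w]

/-- interior case of the SLOPE thresholding operator. If `b < b'` are
consecutive elements of `{0} ∪ c^{∖k}` and `ω b + S(b + ε) < |γ| < ω b' + S(b' − ε)`,
then `z* = (sign γ / ω)(|γ| − S(b + ε))` satisfies `b < |z*| < b'` and minimizes `G`. -/
theorem interior_case_minimizes_G
    {n p m : ℕ} (hn : 0 < n) (hp : 0 < p) (hm : 0 < m)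
    (lam : Fin p → ℝ)
    (hlam_mono : ∀ i j : Fin p, i ≤ j → lam j ≤ lam i)
    (hlam_nonneg : ∀ j, 0 ≤ lam j)
    (β : Fin p → ℝ) (c : Fin m → ℝ)
    (hc_anti : StrictAnti c) (hc_nonneg : ∀ i, 0 ≤ c i)
    (h_attain : ∀ i, ∃ j, |β j| = c i)
    (h_cover : ∀ j, ∃ i, |β j| = c i)
    (k : Fin m)
    (ε : ℝ) (hε_pos : 0 < ε)
    (hε_sep : ∀ i j, i ≠ j → ε < |c i - c j|)
    (hε_min : ∀ i, c i ≠ 0 → ε < c i)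
    (X : Matrix (Fin n) (Fin p) ℝ) (y : Fin n → ℝ)
    (hω : 0 < sqnorm (xtil X β (c k)))
    (b b' : ℝ)
    (hb : b = 0 ∨ ∃ i, i ≠ k ∧ b = c i)
    (hb' : b' = 0 ∨ ∃ i, i ≠ k ∧ b' = c i)
    (hbb' : b < b')
    (h_consec : ∀ x : ℝ, (x = 0 ∨ ∃ i, i ≠ k ∧ x = c i) → ¬ (b < x ∧ x < b'))
    (hγ_lo : sqnorm (xtil X β (c k)) * b + Sval lam β (c k) (b + ε) < |gam X y β (c k)|)
    (hγ_hi : |gam X y β (c k)| < sqnorm (xtil X β (c k)) * b' + Sval lam β (c k) (b' - ε)) :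
    b < |sgn (gam X y β (c k)) / sqnorm (xtil X β (c k)) *
          (|gam X y β (c k)| - Sval lam β (c k) (b + ε))| ∧
    |sgn (gam X y β (c k)) / sqnorm (xtil X β (c k)) *
          (|gam X y β (c k)| - Sval lam β (c k) (b + ε))| < b' ∧
    ∀ w : ℝ,
      Gfun lam X y β (c k)
          (sgn (gam X y β (c k)) / sqnorm (xtil X β (c k)) *
            (|gam X y β (c k)| - Sval lam β (c k) (b + ε)))
        ≤ Gfun lam X y β (c k) w := by
  have hε := lt_sub_of_mem_thresholds hc_nonneg hε_sep hε_min hb hb' hbb'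
  exact interior_case_minimizes_G_general X y hlam_mono hω (nonneg_of_mem_thresholds hc_nonneg hb)
    (fun j hj => h_consec _ (mem_thresholds_of_ne (h_cover j) hj))
    ⟨by linarith, by linarith⟩ ⟨by linarith, by linarith⟩ hγ_lo hγ_hi
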